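/- arXiv:2401.03204 — 2 statements merged into one kernel-verified Lean document; each statement's English description precedes it below -/
import Mathlib

section
/- Theorem 6: For the quaternary sequences u₂ = φ[s₁, s₃], u₄ = φ[s₃, s₄], u₁₂ = φ[s₃+1, s₄] of period p, the 4-adic complexity satisfies Φ₄(u_i) ≥ ⌊log₄((4^p − 1)/(3(1+2p)) + 1)⌋ for i = 2, 4, 12. -/
open Finset

/-- The cyclotomic class `D_i` of order 4 modulo `p` with respect to the
primitive root `θ`: `{θ^(i+4j) mod p : 0 ≤ j < (p-1)/4}`. -/
def cycD (p θ i : ℕ) : Finset ℕ :=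
  (Finset.range ((p - 1) / 4)).image fun j => θ ^ (i + 4 * j) % p

/-- The binary sequence `s₁` with support set `D₀ ∪ D₁`. -/
def seqS1 (p θ : ℕ) (t : ℕ) : ℕ := if t ∈ cycD p θ 0 ∪ cycD p θ 1 then 1 else 0

/-- The binary sequence `s₂` with support set `D₀ ∪ D₃`. -/
def seqS2 (p θ : ℕ) (t : ℕ) : ℕ := if t ∈ cycD p θ 0 ∪ cycD p θ 3 then 1 else 0

/-- The binary sequence `s₃` with support set `D₁ ∪ D₂`. -/
def seqS3 (p θ : ℕ) (t : ℕ) : ℕ := if t ∈ cycD p θ 1 ∪ cycD p θ 2 then 1 else 0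

/-- The binary sequence `s₄` with support set `D₂ ∪ D₃`. -/
def seqS4 (p θ : ℕ) (t : ℕ) : ℕ := if t ∈ cycD p θ 2 ∪ cycD p θ 3 then 1 else 0

/-- The bitwise complement `s + 1` of a binary sequence. -/
def seqCompl (s : ℕ → ℕ) (t : ℕ) : ℕ := 1 - s t

/-- The inverse Gray mapping: `φ[0,0]=0, φ[0,1]=1, φ[1,1]=2, φ[1,0]=3`. -/
def gray (a b : ℕ) : ℕ := if a = 0 then b else 3 - b

/-- The quaternary sequence `φ[r,s] : t ↦ φ[r(t), s(t)]`. -/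
def graySeq (r s : ℕ → ℕ) (t : ℕ) : ℕ := gray (r t) (s t)

/-- The generating value `U(4) = Σ_{t=0}^{p-1} u(t)·4^t` of a quaternary
sequence `u` of period `p`. -/
def seqVal (p : ℕ) (u : ℕ → ℕ) : ℕ := ∑ t ∈ Finset.range p, u t * 4 ^ t

/-- The 4-adic complexity `Φ₄(u) = ⌊log₄((4^p − 1)/gcd(4^p − 1, U(4)) + 1)⌋`
of a quaternary sequence `u` of period `p`. -/
noncomputable def adicComplexity4 (p : ℕ) (u : ℕ → ℕ) : ℤ :=
  ⌊Real.logb 4 (((4 ^ p - 1 : ℕ) : ℝ) / ((Nat.gcd (4 ^ p - 1) (seqVal p u) : ℕ) : ℝ) + 1)⌋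

/-!
Let `η₀, …, η₃` be the Gaussian periods of order 4. The Gauss and Jacobi sums of the quartic
character `θ ↦ I` determine `(η₀ - η₂) ^ 2 + (η₁ - η₃) ^ 2 = -p` and, with `g = η₀ - η₁ + η₂ - η₃`
the quadratic Gauss sum, `(η₀ - η₂) * (η₁ - η₃) = ± y * g` and `g ^ 2 = p`. Being identities modulo
the `p`-th cyclotomic polynomial, these persist when the root of unity is replaced by `4` modulo a
divisor `d` of `∑ t < p, 4 ^ t`. If `d` also divides `U(4)`, which is a linear combination of `1`
and the periods at `4`, eliminating the periods shows that `d` divides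
`(9 + 5 * p) ^ 2 - p * (6 + 8 * z) ^ 2` with `z = ± y`. This number is positive and of order
`p ^ 2`, while `d ≡ 1` modulo `2 * p`, so only a few values of `d` exceeding `1 + 2 * p` are
possible, and congruences exclude each of them. The factor `3` comes from
`4 ^ p - 1 = 3 * ∑ t < p, 4 ^ t`.
-/

section GeomSumDivisors

lemma modEq_one_of_prime_dvd_geom_sum {a p q : ℕ} (hp : p.Prime) (hq : q.Prime)
    (ha : ¬ a ≡ 1 [MOD p]) (hdvd : q ∣ ∑ i ∈ range p, a ^ i) : q ≡ 1 [MOD p] := by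
  have := Fact.mk hp
  have := Fact.mk hq
  have hsum : ∑ i ∈ range p, (a : ZMod q) ^ i = 0 := by
    exact_mod_cast (ZMod.natCast_eq_zero_iff _ q).2 hdvd
  have hpow : (a : ZMod q) ^ p = 1 := by
    rw [← sub_eq_zero, ← geom_sum_mul, hsum, zero_mul]
  have ha1 : (a : ZMod q) ≠ 1 := by
    intro h
    have hqp : q ∣ p := by
      rw [← ZMod.natCast_eq_zero_iff]
      simpa [h] using hsum
    obtain rfl := (Nat.prime_dvd_prime_iff_eq hq hp).1 hqp
    exact ha ((ZMod.natCast_eq_natCast_iff a 1 q).1 (by rw [h, Nat.cast_one]))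
  have ha0 : (a : ZMod q) ≠ 0 := by
    intro h
    rw [h, zero_pow hp.ne_zero] at hpow
    exact zero_ne_one hpow
  have hpq : p ∣ q - 1 :=
    orderOf_eq_prime hpow ha1 ▸ orderOf_dvd_of_pow_eq_one (ZMod.pow_card_sub_one_eq_one ha0)
  exact ((Nat.modEq_iff_dvd' hq.one_le).2 hpq).symm

lemma odd_geom_sum_of_even {a n : ℕ} (ha : Even a) (hn : n ≠ 0) :
    Odd (∑ i ∈ range n, a ^ i) := by
  obtain ⟨n, rfl⟩ := Nat.exists_eq_succ_of_ne_zero hn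
  rw [geom_sum_succ]
  exact (ha.mul_right _).add_one

lemma modEq_one_of_dvd_geom_sum {a p d : ℕ} (hp : p.Prime) (hp2 : p ≠ 2) (ha : Even a)
    (hap : ¬ a ≡ 1 [MOD p]) (hdvd : d ∣ ∑ i ∈ range p, a ^ i) : d ≡ 1 [MOD 2 * p] := by
  have hodd := odd_geom_sum_of_even ha hp.ne_zero
  induction d using Nat.recOnMul with
  | zero => exact absurd (zero_dvd_iff.1 hdvd) hodd.pos.ne'
  | one => rfl
  | prime q hq =>
    have hq2 : q ≡ 1 [MOD 2] := Nat.odd_iff.1 (hodd.of_dvd_nat hdvd)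
    have h2p : Nat.Coprime 2 p := (Nat.coprime_primes Nat.prime_two hp).2 hp2.symm
    exact (Nat.modEq_and_modEq_iff_modEq_mul h2p).1
      ⟨hq2, modEq_one_of_prime_dvd_geom_sum hp hq hap hdvd⟩
  | mul a b iha ihb =>
    exact (iha (dvd_of_mul_right_dvd hdvd)).mul (ihb (dvd_of_mul_left_dvd hdvd))

lemma not_four_modEq_one {p : ℕ} (hp : p.Prime) (hp3 : p ≠ 3) : ¬ 4 ≡ 1 [MOD p] := by
  intro h
  have hdvd : p ∣ 3 := (Nat.modEq_iff_dvd' (by norm_num)).1 h.symm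
  exact hp3 ((Nat.prime_dvd_prime_iff_eq hp Nat.prime_three).1 hdvd)

lemma modEq_one_of_dvd_geom_sum_four {p d : ℕ} (hp : p.Prime) (hp3 : 3 < p)
    (hdvd : d ∣ ∑ i ∈ range p, 4 ^ i) : d ≡ 1 [MOD 2 * p] :=
  modEq_one_of_dvd_geom_sum hp (by omega) (by decide)
    (not_four_modEq_one hp (by omega)) hdvd

lemma not_dvd_geom_sum_four_of_lt {p d : ℕ} (hp : p.Prime) (hp3 : 3 < p) (hd : 1 < d)
    (hdp : d ≤ 2 * p) : ¬ d ∣ ∑ i ∈ range p, 4 ^ i := by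
  intro hdvd
  have h := (Nat.modEq_iff_dvd' hd.le).1 (modEq_one_of_dvd_geom_sum_four hp hp3 hdvd).symm
  have := Nat.le_of_dvd (by omega) h
  omega

/- A proper divisor would exceed `2 * p`, so `1 + 4 * p` would be prime; being `≡ 5 [MOD 8]`, it
does not have `2` as a quadratic residue, whereas `2 ^ (2 * p) = 4 ^ p = 1` modulo it. -/
lemma one_add_four_mul_not_dvd_geom_sum_four {p : ℕ} (hp : p.Prime) (hp3 : 3 < p) :
    ¬ 1 + 4 * p ∣ ∑ i ∈ range p, 4 ^ i := by
  intro hdvd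
  have hodd : p % 2 = 1 := hp.eq_two_or_odd.resolve_left (by omega)
  have hprime : (1 + 4 * p).Prime := by
    by_contra hcomp
    have hsq := Nat.minFac_sq_le_self (by omega : 0 < 1 + 4 * p) hcomp
    have hmf := Nat.minFac_prime (by omega : 1 + 4 * p ≠ 1)
    refine not_dvd_geom_sum_four_of_lt hp hp3 hmf.one_lt ?_ ((Nat.minFac_dvd _).trans hdvd)
    by_contra! hlt
    nlinarith
  have := Fact.mk hprime
  have hpow : (4 : ZMod (1 + 4 * p)) ^ p = 1 := by
    have hsum : ∑ i ∈ range p, (4 : ZMod (1 + 4 * p)) ^ i = 0 := by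
      exact_mod_cast (ZMod.natCast_eq_zero_iff _ _).2 hdvd
    rw [← sub_eq_zero, ← geom_sum_mul, hsum, zero_mul]
  have h2 : (2 : ZMod (1 + 4 * p)) ≠ 0 := by
    intro h
    have := Nat.le_of_dvd two_pos ((ZMod.natCast_eq_zero_iff 2 (1 + 4 * p)).1 (mod_cast h))
    omega
  have hsquare : IsSquare (2 : ZMod (1 + 4 * p)) := by
    rw [ZMod.euler_criterion _ h2, show (1 + 4 * p) / 2 = 2 * p by omega, pow_mul]
    norm_num [hpow]
  rw [ZMod.exists_sq_eq_two_iff (by omega)] at hsquare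
  omega

end GeomSumDivisors

section Diophantine

/- Modulo `p` the right-hand side is `81` and `1 + 2 * p * m` is `1`, so `e ≡ 81`. -/
lemma exists_cofactor_eq {p m y e : ℤ} (hp : p ≠ 0)
    (he : (1 + 2 * p * m) * e = (9 + 5 * p) ^ 2 - p * (6 + 8 * y) ^ 2) :
    ∃ k, e = 81 + p * k ∧
      (1 + 2 * p * m) * k = 25 * p + 90 - 162 * m - (6 + 8 * y) ^ 2 := by
  obtain ⟨k, hk⟩ : p ∣ e - 81 :=
    ⟨25 * p + 90 - (6 + 8 * y) ^ 2 - 2 * m * e, by linear_combination he⟩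
  obtain rfl : e = 81 + p * k := by linarith
  refine ⟨k, rfl, mul_left_cancel₀ hp ?_⟩
  linear_combination he

lemma cofactor_emod_eight {p m y k : ℤ} (hp8 : p % 8 = 5)
    (hk : (1 + 2 * p * m) * k = 25 * p + 90 - 162 * m - (6 + 8 * y) ^ 2) : k % 8 = 3 := by
  obtain ⟨c, rfl⟩ : ∃ c, p = 8 * c + 5 := ⟨p / 8, by omega⟩
  have hcop : IsCoprime (8 : ℤ) (1 + 2 * (8 * c + 5) * m) := by
    rw [show (8 : ℤ) = 2 ^ 3 by norm_num]
    exact IsCoprime.pow_left ⟨-((8 * c + 5) * m), 1, by ring⟩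
  have hdvd : (8 : ℤ) ∣ (1 + 2 * (8 * c + 5) * m) * (k - 3) :=
    ⟨25 * c + 22 - 24 * m - 6 * c * m - 12 * y - 8 * y ^ 2, by linear_combination hk⟩
  have := hcop.dvd_of_dvd_mul_left hdvd
  omega

/- `√p * |6 + 8 * y| ≤ 6 * √p + 4 * p`, and `(9 + 5 * p) - (6 * √p + 4 * p) = (√p - 3) ^ 2`. -/
lemma mul_sq_lt_sq_of_eq_sq_add {p x y : ℤ} (hp : 5 ≤ p) (hxy : p = x ^ 2 + 4 * y ^ 2) :
    p * (6 + 8 * y) ^ 2 < (9 + 5 * p) ^ 2 := by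
  have hlin : 0 < 9 * p + 54 - 96 * y := by
    rcases le_or_gt y 1 with h | h
    · linarith
    · nlinarith [sq_nonneg x]
  have hsq : (6 + 8 * y) ^ 2 ≤ 16 * p + 96 * y + 36 := by nlinarith [sq_nonneg x]
  nlinarith [hsq]

lemma cofactor_eq_three {p m y k : ℤ} (hp : 29 ≤ p) (hp8 : p % 8 = 5) (hm : 2 ≤ m)
    (hpos : 0 < 81 + p * k)
    (hk : (1 + 2 * p * m) * k = 25 * p + 90 - 162 * m - (6 + 8 * y) ^ 2) : k = 3 := by
  have hk8 := cofactor_emod_eight hp8 hk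
  have hlow : -5 < k := by
    by_contra! h
    nlinarith
  have hhigh : k < 11 := by
    by_contra! h
    have hmk : 2 * 11 ≤ m * k := mul_le_mul hm h (by norm_num) (by linarith)
    nlinarith [sq_nonneg (6 + 8 * y)]
  omega

lemma seven_dvd_of_sq_eq {p y : ℤ} (hsq : (6 + 8 * y) ^ 2 = 7 * (p - 57)) :
    7 ∣ 1 + 6 * p := by
  obtain ⟨c, hc⟩ : (7 : ℤ) ∣ 6 + 8 * y := Int.Prime.dvd_pow' (k := 2) (by norm_num) ⟨_, hsq⟩
  rw [hc] at hsq
  exact ⟨49 + 6 * c ^ 2, by linarith⟩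

lemma sq_ne_sub_of_eq_sq_add {p x y : ℤ} (hxy : p = x ^ 2 + 4 * y ^ 2) :
    (6 + 8 * y) ^ 2 ≠ p - 561 := by
  intro hsq
  have hx : x ^ 2 = 60 * y ^ 2 + 96 * y + 597 := by linarith
  have hx9 := congrArg (Int.cast : ℤ → ZMod 9) hx
  push_cast at hx9
  have hne : ∀ u v : ZMod 9, u ^ 2 ≠ 60 * v ^ 2 + 96 * v + 597 := by decide
  exact hne _ _ hx9

lemma le_of_dvd_geom_sum_four_of_lt {p d : ℕ} (hp : p.Prime) (hp8 : p % 8 = 5) (hlt : p < 29)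
    {x y : ℤ} (hxy : (p : ℤ) = x ^ 2 + 4 * y ^ 2) (hdvd : d ∣ ∑ i ∈ range p, 4 ^ i)
    (hd : (d : ℤ) ∣ (9 + 5 * p) ^ 2 - p * (6 + 8 * y) ^ 2) : d ≤ 1 + 2 * p := by
  have hp' : p = 5 ∨ p = 13 := by
    have hp21 : p ≠ 21 := by rintro rfl; norm_num at hp
    omega
  have hp13 : (p : ℤ) ≤ 13 := by omega
  have hy₁ : -1 ≤ y := by nlinarith [sq_nonneg x]
  have hy₂ : y ≤ 1 := by nlinarith [sq_nonneg x]
  have hgcd := Int.dvd_coe_gcd (Int.natCast_dvd_natCast.2 hdvd) hd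
  have hbound : Int.gcd (∑ i ∈ range p, 4 ^ i : ℕ) ((9 + 5 * p) ^ 2 - p * (6 + 8 * y) ^ 2)
      ∈ Set.Icc 1 (1 + 2 * p) := by
    rcases hp' with rfl | rfl <;> interval_cases y <;> decide
  exact (Nat.le_of_dvd hbound.1 (Int.natCast_dvd_natCast.1 hgcd)).trans hbound.2

lemma le_of_dvd_geom_sum_four {p d : ℕ} (hp : p.Prime) (hp8 : p % 8 = 5) {x y : ℤ}
    (hxy : (p : ℤ) = x ^ 2 + 4 * y ^ 2) (hdvd : d ∣ ∑ i ∈ range p, 4 ^ i)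
    (hd : (d : ℤ) ∣ (9 + 5 * p) ^ 2 - p * (6 + 8 * y) ^ 2) : d ≤ 1 + 2 * p := by
  rcases lt_or_ge p 29 with hlt | hge
  · exact le_of_dvd_geom_sum_four_of_lt hp hp8 hlt hxy hdvd hd
  by_contra! hgt
  obtain ⟨m, hm⟩ := (Nat.modEq_iff_dvd' (by omega)).1
    (modEq_one_of_dvd_geom_sum_four hp (by omega) hdvd).symm
  have hdm : (d : ℤ) = 1 + 2 * p * m := by
    zify [(by omega : 1 ≤ d)] at hm
    linarith
  have hm2 : 2 ≤ m := by
    by_contra! h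
    nlinarith
  obtain ⟨e, he⟩ := hd
  have he0 : 0 < e := by
    have hN := mul_sq_lt_sq_of_eq_sq_add (by omega : 5 ≤ (p : ℤ)) hxy
    exact pos_of_mul_pos_right (he ▸ sub_pos.2 hN) (by omega)
  rw [hdm] at he
  obtain ⟨k, rfl, hk⟩ := exists_cofactor_eq (by omega) he.symm
  obtain rfl := cofactor_eq_three (by omega) (by omega) (by omega) he0 hk
  have hm4 : m ≤ 4 := by
    by_contra! h
    nlinarith [sq_nonneg (6 + 8 * y)]
  interval_cases m
  · refine one_add_four_mul_not_dvd_geom_sum_four hp (by omega) ?_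
    rwa [show 1 + 4 * p = d by omega]
  · have h7 : (7 : ℤ) ∣ 1 + 6 * p := seven_dvd_of_sq_eq (y := y) (by push_cast at hk; linarith)
    have h7d : 7 ∣ d := by omega
    exact not_dvd_geom_sum_four_of_lt hp (by omega) (by norm_num) (by omega) (h7d.trans hdvd)
  · exact sq_ne_sub_of_eq_sq_add hxy (by push_cast at hk; linarith)

end Diophantine
section CyclotomicClasses

variable {p θ : ℕ}

lemma pow_mod_injOn (hθ : IsPrimitiveRoot (θ : ZMod p) (p - 1)) :
    Set.InjOn (fun n => θ ^ n % p) (range (p - 1)) := by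
  intro m hm n hn hmn
  refine hθ.pow_inj (mem_range.1 hm) (mem_range.1 hn) ?_
  exact_mod_cast (ZMod.natCast_eq_natCast_iff' _ _ _).2 hmn

lemma image_pow_mod_eq_Ico (hp : p.Prime) (hθ : IsPrimitiveRoot (θ : ZMod p) (p - 1)) :
    (range (p - 1)).image (fun n => θ ^ n % p) = Ico 1 p := by
  refine eq_of_subset_of_card_le (fun t ht => ?_) ?_
  · obtain ⟨n, -, rfl⟩ := mem_image.1 ht
    have hunit : IsUnit ((θ ^ n : ℕ) : ZMod p) := by
      rw [Nat.cast_pow]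
      exact (hθ.isUnit (Nat.sub_ne_zero_of_lt hp.one_lt)).pow n
    have hcop := ((ZMod.isUnit_iff_coprime _ p).1 hunit).symm
    have hne : θ ^ n % p ≠ 0 := fun h =>
      hp.coprime_iff_not_dvd.1 hcop (Nat.dvd_of_mod_eq_zero h)
    exact mem_Ico.2 ⟨Nat.one_le_iff_ne_zero.2 hne, Nat.mod_lt _ hp.pos⟩
  · rw [card_image_of_injOn (pow_mod_injOn hθ), card_range, Nat.card_Ico]

lemma cycD_eq_image_filter (h4 : 4 ∣ p - 1) (i : Fin 4) :
    cycD p θ i = {n ∈ range (p - 1) | n % 4 = (i : ℕ)}.image (fun n => θ ^ n % p) := by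
  have hfilter : {n ∈ range (p - 1) | n % 4 = (i : ℕ)}
      = (range ((p - 1) / 4)).image (fun j => (i : ℕ) + 4 * j) := by
    ext n
    simp only [mem_filter, mem_image, mem_range]
    constructor
    · rintro ⟨hn, hi⟩
      exact ⟨n / 4, by omega, by omega⟩
    · rintro ⟨j, hj, rfl⟩
      omega
  rw [hfilter, image_image, cycD, Function.comp_def]

lemma zero_notMem_cycD (hp : p.Prime) (hθ : IsPrimitiveRoot (θ : ZMod p) (p - 1))
    (h4 : 4 ∣ p - 1) (i : Fin 4) : 0 ∉ cycD p θ i := by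
  intro h
  rw [cycD_eq_image_filter h4] at h
  have h0 := image_subset_image (filter_subset _ _) h
  rw [image_pow_mod_eq_Ico hp hθ] at h0
  simp at h0

lemma eq_of_mem_cycD (hθ : IsPrimitiveRoot (θ : ZMod p) (p - 1)) (h4 : 4 ∣ p - 1)
    {i j : Fin 4} {t : ℕ} (hi : t ∈ cycD p θ i) (hj : t ∈ cycD p θ j) : i = j := by
  simp only [cycD_eq_image_filter h4, mem_image, mem_filter] at hi hj
  obtain ⟨m, ⟨hm, hmi⟩, rfl⟩ := hi
  obtain ⟨n, ⟨hn, hnj⟩, hnm⟩ := hj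
  obtain rfl := pow_mod_injOn hθ hn hm hnm
  exact Fin.ext (hmi.symm.trans hnj)

lemma sum_range_eq_sum_cycD {R : Type*} [AddCommMonoid R] (hp : p.Prime)
    (hθ : IsPrimitiveRoot (θ : ZMod p) (p - 1)) (h4 : 4 ∣ p - 1) (f : ℕ → R) :
    ∑ t ∈ range p, f t = f 0 + ∑ i : Fin 4, ∑ t ∈ cycD p θ i, f t := by
  have hclass (i : Fin 4) : ∑ t ∈ cycD p θ i, f t
      = ∑ n ∈ range (p - 1) with Fin.ofNat 4 n = i, f (θ ^ n % p) := by
    rw [cycD_eq_image_filter h4,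
      sum_image ((pow_mod_injOn hθ).mono (coe_subset.2 (filter_subset _ _)))]
    simp only [Fin.ext_iff, Fin.val_ofNat]
  simp only [hclass]
  rw [sum_fiberwise, ← sum_image (f := f) (pow_mod_injOn hθ), image_pow_mod_eq_Ico hp hθ,
    range_eq_Ico, sum_eq_sum_Ico_succ_bot hp.pos]

/-- A sequence `u` with value `c₀` at `0` and constant value `c i` on the cyclotomic class `D_i`;
its values at `t ≥ p` are unconstrained. -/
structure IsCyclotomicSeq (p θ : ℕ) (u : ℕ → ℕ) (c₀ : ℕ) (c : Fin 4 → ℕ) : Prop where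
  apply_zero : u 0 = c₀
  apply_of_mem : ∀ i : Fin 4, ∀ t ∈ cycD p θ i, u t = c i

namespace IsCyclotomicSeq

variable {r s : ℕ → ℕ} {r₀ s₀ : ℕ} {a b : Fin 4 → ℕ}

lemma indicator_union (hp : p.Prime) (hθ : IsPrimitiveRoot (θ : ZMod p) (p - 1))
    (h4 : 4 ∣ p - 1) (i j : Fin 4) :
    IsCyclotomicSeq p θ (fun t => if t ∈ cycD p θ i ∪ cycD p θ j then 1 else 0) 0
      (fun k => if k = i ∨ k = j then 1 else 0) where
  apply_zero := by simp [zero_notMem_cycD hp hθ h4]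
  apply_of_mem k t hk := by
    have hmem (l : Fin 4) : t ∈ cycD p θ l ↔ k = l :=
      ⟨eq_of_mem_cycD hθ h4 hk, fun h => h ▸ hk⟩
    simp only [mem_union, hmem]

lemma seqCompl (hs : IsCyclotomicSeq p θ s s₀ b) :
    IsCyclotomicSeq p θ (seqCompl s) (1 - s₀) (fun i => 1 - b i) where
  apply_zero := by rw [_root_.seqCompl, hs.apply_zero]
  apply_of_mem i t ht := by rw [_root_.seqCompl, hs.apply_of_mem i t ht]

lemma graySeq (hr : IsCyclotomicSeq p θ r r₀ a) (hs : IsCyclotomicSeq p θ s s₀ b) :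
    IsCyclotomicSeq p θ (graySeq r s) (gray r₀ s₀) (fun i => gray (a i) (b i)) where
  apply_zero := by rw [_root_.graySeq, hr.apply_zero, hs.apply_zero]
  apply_of_mem i t ht := by
    rw [_root_.graySeq, hr.apply_of_mem i t ht, hs.apply_of_mem i t ht]

end IsCyclotomicSeq

end CyclotomicClasses

section CycPeriod

variable {p θ : ℕ} {R : Type*}

/-- The `i`-th Gaussian period of order 4, `∑ t ∈ D_i, r ^ t`, formed with an arbitrary ring element
`r` in place of a complex `p`-th root of unity, so that it can also be evaluated at `r = 4`. -/
def cycPeriod [CommSemiring R] (p θ : ℕ) (r : R) (i : Fin 4) : R :=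
  ∑ t ∈ cycD p θ i, r ^ t

lemma geom_sum_eq_one_add_sum_cycPeriod [CommSemiring R] (hp : p.Prime)
    (hθ : IsPrimitiveRoot (θ : ZMod p) (p - 1)) (h4 : 4 ∣ p - 1) (r : R) :
    ∑ t ∈ range p, r ^ t = 1 + ∑ i, cycPeriod p θ r i := by
  rw [sum_range_eq_sum_cycD hp hθ h4, pow_zero]
  rfl

lemma IsCyclotomicSeq.natCast_seqVal [CommSemiring R] {u : ℕ → ℕ} {c₀ : ℕ} {c : Fin 4 → ℕ}
    (hu : IsCyclotomicSeq p θ u c₀ c) (hp : p.Prime)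
    (hθ : IsPrimitiveRoot (θ : ZMod p) (p - 1)) (h4 : 4 ∣ p - 1) :
    (seqVal p u : R) = c₀ + ∑ i, c i * cycPeriod p θ (4 : R) i := by
  rw [seqVal, sum_range_eq_sum_cycD hp hθ h4, hu.apply_zero]
  push_cast
  simp only [mul_one, cycPeriod, mul_sum]
  congr 1
  refine sum_congr rfl fun i _ => sum_congr rfl fun t ht => ?_
  rw [hu.apply_of_mem i t ht]

/-- The relations satisfied by the Gaussian periods of order 4 of a prime `p ≡ 5 [MOD 8]` with
`p = x ^ 2 + 4 * y ^ 2`, in terms of `η₀ - η₂`, `η₁ - η₃` and the quadratic Gauss sum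
`η₀ - η₁ + η₂ - η₃`. -/
structure CycPeriodRelations [CommRing R] (p θ : ℕ) (y : ℤ) (r : R) : Prop where
  sq_add_sq : (cycPeriod p θ r 0 - cycPeriod p θ r 2) ^ 2
    + (cycPeriod p θ r 1 - cycPeriod p θ r 3) ^ 2 = -p
  mul : (cycPeriod p θ r 0 - cycPeriod p θ r 2) * (cycPeriod p θ r 1 - cycPeriod p θ r 3)
    = y * (cycPeriod p θ r 0 - cycPeriod p θ r 1 + cycPeriod p θ r 2 - cycPeriod p θ r 3)
  sq : (cycPeriod p θ r 0 - cycPeriod p θ r 1 + cycPeriod p θ r 2 - cycPeriod p θ r 3) ^ 2 = p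

end CycPeriod

section Characters

lemma exists_units_generator {F : Type*} [Field F] [Fintype F] {g : F}
    (hg : IsPrimitiveRoot g (Fintype.card F - 1)) :
    ∃ u : Fˣ, (u : F) = g ∧ ∀ v, v ∈ Subgroup.zpowers u := by
  classical
  obtain ⟨u, rfl⟩ := hg.isUnit (Nat.sub_ne_zero_of_lt Fintype.one_lt_card)
  have hcard : Nat.card (Subgroup.zpowers u) = Nat.card Fˣ := by
    rw [Nat.card_zpowers, ← (IsPrimitiveRoot.coe_units_iff.1 hg).eq_orderOf,
      Nat.card_eq_fintype_card, Fintype.card_units]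
  refine ⟨u, rfl, fun v => ?_⟩
  rw [Subgroup.eq_top_of_card_eq _ hcard]
  exact Subgroup.mem_top v

lemma mulChar_ext_of_isPrimitiveRoot {F R : Type*} [Field F] [Fintype F] [CommRing R] {g : F}
    (hg : IsPrimitiveRoot g (Fintype.card F - 1)) {χ φ : MulChar F R} (h : χ g = φ g) :
    χ = φ := by
  obtain ⟨u, rfl, hu⟩ := exists_units_generator hg
  exact (MulChar.eq_iff hu χ φ).2 h

lemma exists_mulChar_apply_eq {F R : Type*} [Field F] [Fintype F] [CommRing R] {g : F}
    (hg : IsPrimitiveRoot g (Fintype.card F - 1)) {w : R} (hw : w ^ (Fintype.card F - 1) = 1) :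
    ∃ χ : MulChar F R, χ g = w := by
  classical
  obtain ⟨u, rfl, hu⟩ := exists_units_generator hg
  obtain ⟨w, rfl⟩ := IsUnit.of_pow_eq_one hw (Nat.sub_ne_zero_of_lt Fintype.one_lt_card)
  have hmem : w ∈ rootsOfUnity (Fintype.card Fˣ) R := by
    rw [mem_rootsOfUnity, Fintype.card_units]
    exact Units.ext (by rw [Units.val_pow_eq_pow_val, Units.val_one, hw])
  exact ⟨MulChar.ofRootOfUnity hmem hu, MulChar.ofRootOfUnity_spec hmem hu⟩

lemma ne_one_of_apply_ne_one {F R : Type*} [CommMonoid F] [CommMonoidWithZero R]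
    {χ : MulChar F R} {a : F} (ha : IsUnit a) (h : χ a ≠ 1) : χ ≠ 1 := by
  rintro rfl
  exact h (MulChar.one_apply ha)

lemma mulChar_inv_apply_eq_neg_I {F : Type*} [Field F] [Finite F] {χ : MulChar F ℂ} {a : F}
    (h : χ a = Complex.I) : χ⁻¹ a = -Complex.I := by
  rw [← MulChar.star_apply', h, Complex.star_def, Complex.conj_I]

lemma gaussSum_mul_gaussSum_inv {F R : Type*} [Field F] [Fintype F] [CommRing R] [IsDomain R]
    {χ : MulChar F R} (hχ : χ ≠ 1) {ψ : AddChar F R} (hψ : ψ.IsPrimitive) :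
    gaussSum χ ψ * gaussSum χ⁻¹ ψ = χ (-1) * Fintype.card F := by
  rw [← mul_gaussSum_inv_eq_gaussSum χ⁻¹ ψ, mul_left_comm, gaussSum_mul_gaussSum_eq_card hχ hψ,
    MulChar.inv_apply', inv_neg_one]

lemma star_jacobiSum_eq {F : Type*} [Field F] [Fintype F] (χ φ : MulChar F ℂ) :
    star (jacobiSum χ φ) = jacobiSum χ⁻¹ φ⁻¹ := by
  simp only [jacobiSum, star_sum, star_mul', MulChar.star_apply']

lemma exists_eq_add_mul_I_of_mem_adjoin {z : ℂ} (hz : z ∈ Algebra.adjoin ℤ {Complex.I}) :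
    ∃ a b : ℤ, z = a + b * Complex.I := by
  have hle : Algebra.adjoin ℤ {Complex.I} ≤ GaussianInt.toComplex.toIntAlgHom.range :=
    Algebra.adjoin_le (Set.singleton_subset_iff.2 ⟨⟨0, 1⟩, by simp [GaussianInt.toComplex_def]⟩)
  obtain ⟨w, rfl⟩ := hle hz
  exact ⟨w.re, w.im, GaussianInt.toComplex_def w⟩

/- The Jacobi sum is `-1 + z * (I - 1) ^ 2` with `z` a Gaussian integer, and `(I - 1) ^ 2 = -2 * I`,
so its imaginary part is even. -/
lemma exists_jacobiSum_eq_of_pow_four_eq_one {F : Type*} [Field F] [Fintype F]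
    (h4 : 4 ∣ Fintype.card F - 1) {χ : MulChar F ℂ} (hχ4 : χ ^ 4 = 1) (hχ2 : χ * χ ≠ 1) :
    ∃ x y : ℤ, (Fintype.card F : ℤ) = x ^ 2 + 4 * y ^ 2 ∧
      jacobiSum χ χ = x + 2 * y * Complex.I := by
  obtain ⟨z, hz, hJ⟩ := exists_jacobiSum_eq_neg_one_add (by norm_num) hχ4 hχ4 h4
    Complex.isPrimitiveRoot_I
  obtain ⟨a, b, rfl⟩ := exists_eq_add_mul_I_of_mem_adjoin hz
  have hJ' : jacobiSum χ χ = ((2 * b - 1 : ℤ) : ℂ) + 2 * ((-a : ℤ) : ℂ) * Complex.I := by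
    rw [hJ]
    push_cast
    linear_combination (a + b * Complex.I - 2 * b) * Complex.I_sq
  refine ⟨2 * b - 1, -a, ?_, hJ'⟩
  have hχ1 : χ ≠ 1 := by
    rintro rfl
    exact hχ2 (one_mul 1)
  have hchar : ringChar ℂ ≠ ringChar F := by
    rw [ringChar.eq_zero]
    exact (CharP.ringChar_ne_zero_of_finite F).symm
  have hnorm := jacobiSum_mul_jacobiSum_inv hchar hχ1 hχ1 hχ2
  rw [← star_jacobiSum_eq, hJ'] at hnorm
  simp only [star_add, star_mul', star_ofNat, star_intCast, Complex.star_def,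
    Complex.conj_I] at hnorm
  have hcast : (Fintype.card F : ℂ) = ((2 * b - 1 : ℤ) : ℂ) ^ 2 + 4 * ((-a : ℤ) : ℂ) ^ 2 := by
    linear_combination -hnorm - 4 * ((-a : ℤ) : ℂ) ^ 2 * Complex.I_sq
  exact_mod_cast hcast

end Characters

section GaussSum

variable {p θ : ℕ} [hp : Fact p.Prime]

lemma sum_zmod_eq_sum_range {M : Type*} [AddCommMonoid M] {n : ℕ} [NeZero n] (f : ZMod n → M) :
    ∑ a, f a = ∑ t ∈ range n, f t :=
  sum_nbij' ZMod.val (fun t => (t : ZMod n)) (fun a _ => mem_range.2 (ZMod.val_lt a))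
    (fun t _ => mem_univ _) (fun a _ => ZMod.natCast_zmod_val a)
    (fun t ht => ZMod.val_cast_of_lt (mem_range.1 ht))
    (fun a _ => by rw [ZMod.natCast_zmod_val])

lemma pow_half_eq_neg_one (hp2 : p ≠ 2) (hθ : IsPrimitiveRoot (θ : ZMod p) (p - 1)) :
    (θ : ZMod p) ^ ((p - 1) / 2) = -1 := by
  have hodd := hp.out.eq_two_or_odd.resolve_left hp2
  have hpos := hp.out.two_le
  exact (hθ.pow (by omega) (by omega : p - 1 = (p - 1) / 2 * 2)).eq_neg_one_of_two_right

section CommRing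

variable {R : Type*} [CommRing R] {χ : MulChar (ZMod p) R} {ζ : R}

lemma gaussSum_eq_sum_cycPeriod (hθ : IsPrimitiveRoot (θ : ZMod p) (p - 1)) (h4 : 4 ∣ p - 1)
    (hχ : χ θ ^ 4 = 1) (hζ : ζ ^ p = 1) :
    gaussSum χ (AddChar.zmodChar p hζ)
      = ∑ i : Fin 4, χ θ ^ (i : ℕ) * cycPeriod p θ ζ i := by
  have hclass (i : Fin 4) : ∀ t ∈ cycD p θ i, χ t = χ θ ^ (i : ℕ) := by
    intro t ht
    obtain ⟨j, -, rfl⟩ := mem_image.1 ht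
    rw [ZMod.natCast_mod, Nat.cast_pow, map_pow, pow_add, pow_mul, hχ, one_pow, mul_one]
  rw [gaussSum, sum_zmod_eq_sum_range, sum_range_eq_sum_cycD hp.out hθ h4, Nat.cast_zero,
    MulChar.map_nonunit χ not_isUnit_zero, zero_mul, zero_add]
  refine sum_congr rfl fun i _ => ?_
  rw [cycPeriod, mul_sum]
  exact sum_congr rfl fun t ht => by rw [hclass i t ht, AddChar.zmodChar_apply']

lemma gaussSum_eq_of_apply_sq_eq_neg_one (hθ : IsPrimitiveRoot (θ : ZMod p) (p - 1))
    (h4 : 4 ∣ p - 1) (hχ : χ θ ^ 2 = -1) (hζ : ζ ^ p = 1) :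
    gaussSum χ (AddChar.zmodChar p hζ) = cycPeriod p θ ζ 0 - cycPeriod p θ ζ 2
      + χ θ * (cycPeriod p θ ζ 1 - cycPeriod p θ ζ 3) := by
  have hχ4 : χ θ ^ 4 = 1 := by linear_combination (χ θ ^ 2 - 1) * hχ
  rw [gaussSum_eq_sum_cycPeriod hθ h4 hχ4 hζ, Fin.sum_univ_four]
  simp only [Fin.coe_ofNat_eq_mod]
  linear_combination (cycPeriod p θ ζ 2 + χ θ * cycPeriod p θ ζ 3) * hχ

lemma gaussSum_eq_of_apply_eq_neg_one (hθ : IsPrimitiveRoot (θ : ZMod p) (p - 1))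
    (h4 : 4 ∣ p - 1) (hχ : χ θ = -1) (hζ : ζ ^ p = 1) :
    gaussSum χ (AddChar.zmodChar p hζ)
      = cycPeriod p θ ζ 0 - cycPeriod p θ ζ 1 + cycPeriod p θ ζ 2 - cycPeriod p θ ζ 3 := by
  rw [gaussSum_eq_sum_cycPeriod hθ h4 (by rw [hχ]; norm_num) hζ, hχ, Fin.sum_univ_four]
  simp only [Fin.coe_ofNat_eq_mod]
  ring

end CommRing

section Complex

variable {χ : MulChar (ZMod p) ℂ} {ζ : ℂ}

lemma cycPeriod_sq_add_sq (hp8 : p % 8 = 5) (hθ : IsPrimitiveRoot (θ : ZMod p) (p - 1))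
    (hχ : χ θ = Complex.I) (hζ : IsPrimitiveRoot ζ p) :
    (cycPeriod p θ ζ 0 - cycPeriod p θ ζ 2) ^ 2
      + (cycPeriod p θ ζ 1 - cycPeriod p θ ζ 3) ^ 2 = -p := by
  have h4 : 4 ∣ p - 1 := by omega
  have hunit := hθ.isUnit (by omega)
  have hχ1 : χ ≠ 1 := ne_one_of_apply_ne_one hunit (by rw [hχ]; simp [Complex.ext_iff])
  have hχi := mulChar_inv_apply_eq_neg_I hχ
  have hχneg : χ (-1) = -1 := by
    rw [← pow_half_eq_neg_one (by omega) hθ, map_pow, hχ,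
      show (p - 1) / 2 = 4 * (p / 8) + 2 by omega, pow_add, pow_mul, Complex.I_pow_four,
      one_pow, one_mul, Complex.I_sq]
  have hprod := gaussSum_mul_gaussSum_inv hχ1
    (AddChar.zmodChar_primitive_of_primitive_root p hζ)
  rw [gaussSum_eq_of_apply_sq_eq_neg_one hθ h4 (by rw [hχ, Complex.I_sq]) hζ.pow_eq_one,
    gaussSum_eq_of_apply_sq_eq_neg_one hθ h4 (by rw [hχi, neg_sq, Complex.I_sq]) hζ.pow_eq_one,
    hχ, hχi, hχneg, ZMod.card] at hprod
  linear_combination hprod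
    + (cycPeriod p θ ζ 1 - cycPeriod p θ ζ 3) ^ 2 * Complex.I_sq

lemma cycPeriod_sub_mul_sub (hθ : IsPrimitiveRoot (θ : ZMod p) (p - 1)) (h4 : 4 ∣ p - 1)
    (hχ : χ θ = Complex.I) {x y : ℤ} (hJ : jacobiSum χ χ = x + 2 * y * Complex.I)
    (hζ : IsPrimitiveRoot ζ p) :
    (cycPeriod p θ ζ 0 - cycPeriod p θ ζ 2) * (cycPeriod p θ ζ 1 - cycPeriod p θ ζ 3)
      = y * (cycPeriod p θ ζ 0 - cycPeriod p θ ζ 1 + cycPeriod p θ ζ 2 - cycPeriod p θ ζ 3) := by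
  have hunit := hθ.isUnit (Nat.sub_ne_zero_of_lt hp.out.one_lt)
  have hχi := mulChar_inv_apply_eq_neg_I hχ
  have hJi : jacobiSum χ⁻¹ χ⁻¹ = x - 2 * y * Complex.I := by
    rw [← star_jacobiSum_eq, hJ]
    simp [sub_eq_add_neg]
  have hχχ : (χ * χ) θ = -1 := by rw [MulChar.mul_apply, hχ, Complex.I_mul_I]
  have hχχi : (χ⁻¹ * χ⁻¹) θ = -1 := by rw [MulChar.mul_apply, hχi, neg_mul_neg, Complex.I_mul_I]
  have hmul := jacobiSum_mul_nontrivial (ne_one_of_apply_ne_one hunit (by rw [hχχ]; norm_num))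
    (AddChar.zmodChar p hζ.pow_eq_one)
  have hmuli := jacobiSum_mul_nontrivial (ne_one_of_apply_ne_one hunit (by rw [hχχi]; norm_num))
    (AddChar.zmodChar p hζ.pow_eq_one)
  rw [gaussSum_eq_of_apply_eq_neg_one hθ h4 hχχ, hJ,
    gaussSum_eq_of_apply_sq_eq_neg_one hθ h4 (by rw [hχ, Complex.I_sq]), hχ] at hmul
  rw [gaussSum_eq_of_apply_eq_neg_one hθ h4 hχχi, hJi,
    gaussSum_eq_of_apply_sq_eq_neg_one hθ h4 (by rw [hχi, neg_sq, Complex.I_sq]), hχi] at hmuli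
  have h4I : 4 * Complex.I ≠ 0 := by simp
  refine mul_left_cancel₀ h4I ?_
  linear_combination hmuli - hmul

lemma cycPeriod_alternating_sq (h4 : 4 ∣ p - 1) (hθ : IsPrimitiveRoot (θ : ZMod p) (p - 1))
    (hζ : IsPrimitiveRoot ζ p) :
    (cycPeriod p θ ζ 0 - cycPeriod p θ ζ 1 + cycPeriod p θ ζ 2 - cycPeriod p θ ζ 3) ^ 2 = p := by
  have hp1 := hp.out.one_lt
  have hunit := hθ.isUnit (by omega)
  have hcard : IsPrimitiveRoot (θ : ZMod p) (Fintype.card (ZMod p) - 1) := by rwa [ZMod.card]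
  obtain ⟨χ, hχ⟩ := exists_mulChar_apply_eq hcard (w := (-1 : ℂ)) <| by
    rw [ZMod.card, Even.neg_one_pow (even_iff_two_dvd.2 (by omega))]
  have hquad : χ.IsQuadratic := MulChar.isQuadratic_iff_sq_eq_one.2 <|
    mulChar_ext_of_isPrimitiveRoot hcard <| by
      rw [MulChar.pow_apply' χ two_ne_zero, hχ, neg_one_sq, MulChar.one_apply hunit]
  have hχneg : χ (-1) = 1 := by
    rw [← pow_half_eq_neg_one (by omega) hθ, map_pow, hχ,
      Even.neg_one_pow (even_iff_two_dvd.2 (by omega))]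
  rw [← gaussSum_eq_of_apply_eq_neg_one hθ h4 hχ hζ.pow_eq_one,
    gaussSum_sq (ne_one_of_apply_ne_one hunit (by rw [hχ]; norm_num)) hquad
      (AddChar.zmodChar_primitive_of_primitive_root p hζ),
    hχneg, ZMod.card, one_mul]

lemma exists_cycPeriodRelations (hp8 : p % 8 = 5) (hθ : IsPrimitiveRoot (θ : ZMod p) (p - 1))
    (hζ : IsPrimitiveRoot ζ p) :
    ∃ x y : ℤ, (p : ℤ) = x ^ 2 + 4 * y ^ 2 ∧ CycPeriodRelations p θ y ζ := by
  have h4 : 4 ∣ p - 1 := by omega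
  have hcard : IsPrimitiveRoot (θ : ZMod p) (Fintype.card (ZMod p) - 1) := by rwa [ZMod.card]
  obtain ⟨χ, hχ⟩ := exists_mulChar_apply_eq hcard (w := Complex.I) <| by
    rw [ZMod.card, ← Nat.mul_div_cancel' h4, pow_mul, Complex.I_pow_four, one_pow]
  have hunit := hθ.isUnit (by omega)
  have hχ4 : χ ^ 4 = 1 := mulChar_ext_of_isPrimitiveRoot hcard <| by
    rw [MulChar.pow_apply' χ four_ne_zero, hχ, Complex.I_pow_four, MulChar.one_apply hunit]
  have hχ2 : χ * χ ≠ 1 := ne_one_of_apply_ne_one hunit <| by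
    rw [MulChar.mul_apply, hχ, Complex.I_mul_I]
    norm_num
  obtain ⟨x, y, hxy, hJ⟩ :=
    exists_jacobiSum_eq_of_pow_four_eq_one (by rwa [ZMod.card]) hχ4 hχ2
  rw [ZMod.card] at hxy
  exact ⟨x, y, hxy, cycPeriod_sq_add_sq hp8 hθ hχ hζ, cycPeriod_sub_mul_sub hθ h4 hχ hJ hζ,
    cycPeriod_alternating_sq h4 hθ hζ⟩

end Complex

end GaussSum

section Specialization

open Polynomial

lemma aeval_eq_zero_of_aeval_cyclotomic_eq_zero {K R : Type*} [Field K] [CharZero K] [CommRing R]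
    {n : ℕ} (hn : 0 < n) {ζ : K} (hζ : IsPrimitiveRoot ζ n) {r : R}
    (hr : aeval r (cyclotomic n ℤ) = 0) {f : ℤ[X]} (hf : aeval ζ f = 0) : aeval r f = 0 := by
  have hdvd : cyclotomic n ℤ ∣ f := by
    rw [cyclotomic_eq_minpoly hζ hn]
    exact minpoly.isIntegrallyClosed_dvd (hζ.isIntegral hn) hf
  exact aeval_eq_zero_of_dvd_aeval_eq_zero hdvd hr

lemma aeval_cycPeriod_X {R : Type*} [CommRing R] {p θ : ℕ} (r : R) (i : Fin 4) :
    aeval r (cycPeriod p θ (X : ℤ[X]) i) = cycPeriod p θ r i := by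
  simp only [cycPeriod, map_sum, map_pow, aeval_X]

lemma CycPeriodRelations.specialize {K R : Type*} [Field K] [CharZero K] [CommRing R] {p θ : ℕ}
    (hp : p.Prime) {y : ℤ} {ζ : K} (hζ : IsPrimitiveRoot ζ p) (h : CycPeriodRelations p θ y ζ)
    {r : R} (hr : ∑ t ∈ range p, r ^ t = 0) : CycPeriodRelations p θ y r := by
  have := Fact.mk hp
  have hcyc : aeval r (cyclotomic p ℤ) = 0 := by
    simpa only [cyclotomic_prime, map_sum, map_pow, aeval_X] using hr
  have transfer {f g : ℤ[X]} (hfg : aeval ζ f = aeval ζ g) : aeval r f = aeval r g := by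
    rw [← sub_eq_zero, ← map_sub] at hfg ⊢
    exact aeval_eq_zero_of_aeval_cyclotomic_eq_zero hp.pos hζ hcyc hfg
  let η : Fin 4 → ℤ[X] := cycPeriod p θ X
  have hadd := transfer (f := (η 0 - η 2) ^ 2 + (η 1 - η 3) ^ 2) (g := -(p : ℤ[X]))
    (by simpa [η, aeval_cycPeriod_X] using h.sq_add_sq)
  have hmul := transfer (f := (η 0 - η 2) * (η 1 - η 3))
    (g := (y : ℤ[X]) * (η 0 - η 1 + η 2 - η 3)) (by simpa [η, aeval_cycPeriod_X] using h.mul)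
  have hsq := transfer (f := (η 0 - η 1 + η 2 - η 3) ^ 2) (g := (p : ℤ[X]))
    (by simpa [η, aeval_cycPeriod_X] using h.sq)
  simp only [η, map_add, map_sub, map_neg, map_mul, map_pow, map_natCast, map_intCast,
    aeval_cycPeriod_X] at hadd hmul hsq
  exact ⟨hadd, hmul, hsq⟩

end Specialization

section AdicComplexity

/- Squaring `k + δ * g = -2 * (α * a + β * b)` gives `hlin`, and squaring `hlin` eliminates `g`.
Passing from `y` to `z = ±y` absorbs the sign of `α * β * k * δ`. -/
lemma exists_sq_eq_and_sixteen_mul_sub_eq_zero {R : Type*} [CommRing R] {p a b g : R} {y : ℤ}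
    (hadd : a ^ 2 + b ^ 2 = -p) (hmul : a * b = y * g) (hsq : g ^ 2 = p) {k δ α β : ℤ}
    (hk : k ^ 2 = 36) (hδ : δ ^ 2 = 4) (hα : α ^ 2 = 4) (hβ : β ^ 2 = 4)
    (h : k + δ * g + 2 * α * a + 2 * β * b = 0) :
    ∃ z : ℤ, z ^ 2 = y ^ 2 ∧ 16 * ((9 + 5 * p) ^ 2 - p * (6 + 8 * z) ^ 2) = 0 := by
  have hprod : (α * β * k * δ) ^ 2 = 48 ^ 2 := by
    rw [mul_pow, mul_pow, mul_pow, hk, hδ, hα, hβ]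
    norm_num
  obtain ⟨ε, hε, hεprod⟩ : ∃ ε : ℤ, ε ^ 2 = 1 ∧ α * β * k * δ = -48 * ε := by
    rcases sq_eq_sq_iff_eq_or_eq_neg.1 hprod with h48 | h48
    · exact ⟨-1, by norm_num, by rw [h48]; norm_num⟩
    · exact ⟨1, by norm_num, by rw [h48]; norm_num⟩
  have hcoeff : (8 * α * β * y - 2 * k * δ) ^ 2 = 16 * (6 + 8 * (ε * y)) ^ 2 := by
    linear_combination 64 * y ^ 2 * (β ^ 2 * hα + 4 * hβ) - 32 * y * hεprod
      + 4 * (δ ^ 2 * hk + 36 * hδ) - 1024 * y ^ 2 * hε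
  refine ⟨ε * y, by rw [mul_pow, hε, one_mul], ?_⟩
  have hcoeffR := congrArg (Int.cast : ℤ → R) hcoeff
  have hkR := congrArg (Int.cast : ℤ → R) hk
  have hδR := congrArg (Int.cast : ℤ → R) hδ
  have hαR := congrArg (Int.cast : ℤ → R) hα
  have hβR := congrArg (Int.cast : ℤ → R) hβ
  push_cast at hcoeffR hkR hδR hαR hβR ⊢
  have hlin : 4 * (9 + 5 * p) = (8 * α * β * y - 2 * k * δ) * g := by
    linear_combination (k + δ * g - 2 * α * a - 2 * β * b) * h - hkR - g ^ 2 * hδR - 4 * hsq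
      + 4 * a ^ 2 * hαR + 4 * b ^ 2 * hβR + 16 * hadd + 8 * α * β * hmul
  linear_combination (4 * (9 + 5 * p) + (8 * α * β * y - 2 * k * δ) * g) * hlin
    + (8 * α * β * y - 2 * k * δ) ^ 2 * hsq + p * hcoeffR

variable {p θ : ℕ}

namespace IsCyclotomicSeq

variable {u : ℕ → ℕ} {c₀ : ℕ} {c : Fin 4 → ℕ}

lemma four_mul_natCast_seqVal {R : Type*} [CommRing R] (hu : IsCyclotomicSeq p θ u c₀ c)
    (hp : p.Prime) (hθ : IsPrimitiveRoot (θ : ZMod p) (p - 1)) (h4 : 4 ∣ p - 1)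
    (h : ∑ t ∈ range p, (4 : R) ^ t = 0) :
    4 * (seqVal p u : R) = 4 * c₀ - (c 0 + c 1 + c 2 + c 3)
      + (c 0 - c 1 + c 2 - c 3) * (cycPeriod p θ (4 : R) 0 - cycPeriod p θ (4 : R) 1
        + cycPeriod p θ (4 : R) 2 - cycPeriod p θ (4 : R) 3)
      + 2 * (c 0 - c 2) * (cycPeriod p θ (4 : R) 0 - cycPeriod p θ (4 : R) 2)
      + 2 * (c 1 - c 3) * (cycPeriod p θ (4 : R) 1 - cycPeriod p θ (4 : R) 3) := by
  rw [geom_sum_eq_one_add_sum_cycPeriod hp hθ h4, Fin.sum_univ_four] at h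
  rw [hu.natCast_seqVal hp hθ h4, Fin.sum_univ_four]
  linear_combination (c 0 + c 1 + c 2 + c 3 : R) * h

lemma le_of_dvd_geom_sum_of_dvd_seqVal (hu : IsCyclotomicSeq p θ u c₀ c) (hp : p.Prime)
    (hp8 : p % 8 = 5) (hθ : IsPrimitiveRoot (θ : ZMod p) (p - 1))
    (h₀ : (4 * c₀ - (c 0 + c 1 + c 2 + c 3) : ℤ) ^ 2 = 36) (h₀₂ : (c 0 - c 2 : ℤ) ^ 2 = 4)
    (h₁₃ : (c 1 - c 3 : ℤ) ^ 2 = 4) (halt : (c 0 - c 1 + c 2 - c 3 : ℤ) ^ 2 = 4) {d : ℕ}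
    (hd : d ∣ ∑ t ∈ range p, 4 ^ t) (hdu : d ∣ seqVal p u) : d ≤ 1 + 2 * p := by
  have := Fact.mk hp
  obtain ⟨x, y, hxy, hrel⟩ :=
    exists_cycPeriodRelations hp8 hθ (Complex.isPrimitiveRoot_exp p hp.ne_zero)
  have hgeom : ∑ t ∈ range p, (4 : ZMod d) ^ t = 0 := by
    exact_mod_cast (ZMod.natCast_eq_zero_iff _ _).2 hd
  have hrel4 := hrel.specialize hp (Complex.isPrimitiveRoot_exp p hp.ne_zero) hgeom
  have hU := hu.four_mul_natCast_seqVal hp hθ (by omega) hgeom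
  rw [(ZMod.natCast_eq_zero_iff _ _).2 hdu, mul_zero] at hU
  obtain ⟨z, hz, hdvd⟩ := exists_sq_eq_and_sixteen_mul_sub_eq_zero hrel4.sq_add_sq hrel4.mul
    hrel4.sq h₀ halt h₀₂ h₁₃ (by push_cast; exact hU.symm)
  have hdvd16 : (d : ℤ) ∣ 16 * ((9 + 5 * p) ^ 2 - p * (6 + 8 * z) ^ 2) := by
    rw [← ZMod.intCast_zmod_eq_zero_iff_dvd]
    exact_mod_cast hdvd
  have hodd : Odd d := (odd_geom_sum_of_even (by decide) hp.ne_zero).of_dvd_nat hd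
  have hcop : IsCoprime (d : ℤ) 16 :=
    Nat.isCoprime_iff_coprime.2 (hodd.coprime_two_right.pow_right 4)
  exact le_of_dvd_geom_sum_four hp hp8 (hz ▸ hxy) hd (hcop.dvd_of_dvd_mul_left hdvd16)

end IsCyclotomicSeq

lemma gcd_le_three_mul_of_gcd_geom_sum_le {m n B : ℕ} (hn : n ≠ 0)
    (h : Nat.gcd (∑ t ∈ range n, 4 ^ t) m ≤ B) : Nat.gcd (4 ^ n - 1) m ≤ 3 * B := by
  have hgeom : 4 ^ n - 1 = 3 * ∑ t ∈ range n, 4 ^ t := by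
    have := geom_sum_mul_add 3 n
    norm_num at this
    omega
  have hpos : 0 < ∑ t ∈ range n, 4 ^ t := (odd_geom_sum_of_even (by decide) hn).pos
  have hdvd : Nat.gcd (4 ^ n - 1) m ∣ 3 * Nat.gcd (∑ t ∈ range n, 4 ^ t) m := by
    rw [hgeom, ← Nat.gcd_mul_left]
    exact Nat.gcd_dvd_gcd_mul_left_right _ _ _
  exact (Nat.le_of_dvd (Nat.mul_pos three_pos (Nat.gcd_pos_of_pos_left _ hpos)) hdvd).trans
    (Nat.mul_le_mul_left 3 h)

lemma floor_logb_le_adicComplexity4 {u : ℕ → ℕ} {B : ℕ} (hp₀ : p ≠ 0)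
    (h : Nat.gcd (4 ^ p - 1) (seqVal p u) ≤ B) :
    ⌊Real.logb 4 (((4 ^ p - 1 : ℕ) : ℝ) / B + 1)⌋ ≤ adicComplexity4 p u := by
  have hpow : 1 < 4 ^ p := Nat.one_lt_pow hp₀ (by norm_num)
  have hpos : 0 < Nat.gcd (4 ^ p - 1) (seqVal p u) := Nat.gcd_pos_of_pos_left _ (by omega)
  refine Int.floor_mono (Real.logb_le_logb_of_le (by norm_num) (by positivity) ?_)
  gcongr

end AdicComplexity

theorem theorem6_general {p θ : ℕ} (hp : p.Prime) (hp8 : p % 8 = 5)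
    (hθ : IsPrimitiveRoot (θ : ZMod p) (p - 1)) {u : ℕ → ℕ} {c₀ : ℕ} {c : Fin 4 → ℕ}
    (hu : IsCyclotomicSeq p θ u c₀ c)
    (h₀ : (4 * c₀ - (c 0 + c 1 + c 2 + c 3) : ℤ) ^ 2 = 36) (h₀₂ : (c 0 - c 2 : ℤ) ^ 2 = 4)
    (h₁₃ : (c 1 - c 3 : ℤ) ^ 2 = 4) (halt : (c 0 - c 1 + c 2 - c 3 : ℤ) ^ 2 = 4) :
    ⌊Real.logb 4 (((4 ^ p - 1 : ℕ) : ℝ) / (3 * (1 + 2 * (p : ℝ))) + 1)⌋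
      ≤ adicComplexity4 p u := by
  have hgcd := gcd_le_three_mul_of_gcd_geom_sum_le hp.ne_zero <|
    hu.le_of_dvd_geom_sum_of_dvd_seqVal hp hp8 hθ h₀ h₀₂ h₁₃ halt
      (Nat.gcd_dvd_left _ _) (Nat.gcd_dvd_right _ _)
  exact_mod_cast floor_logb_le_adicComplexity4 hp.ne_zero hgcd

theorem theorem6
    (p : ℕ) (hp : p.Prime) (hp8 : p % 8 = 5)
    (x y : ℤ) (hx : x % 4 = 1) (hxy : (p : ℤ) = x ^ 2 + 4 * y ^ 2)
    (θ : ℕ) (hθ : IsPrimitiveRoot (θ : ZMod p) (p - 1))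
    (hy : 16 * (((cycD p θ 0).filter (fun a => (a + 1) % p ∈ cycD p θ 1)).card : ℤ)
        = (p : ℤ) + 1 + 2 * x - 8 * y)
    :
    ⌊Real.logb 4 (((4 ^ p - 1 : ℕ) : ℝ) / ((3 * (1 + 2 * (p : ℝ)))) + 1)⌋ ≤
      adicComplexity4 p (graySeq (seqS1 p θ) (seqS3 p θ)) ∧
    ⌊Real.logb 4 (((4 ^ p - 1 : ℕ) : ℝ) / ((3 * (1 + 2 * (p : ℝ)))) + 1)⌋ ≤
      adicComplexity4 p (graySeq (seqS3 p θ) (seqS4 p θ)) ∧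
    ⌊Real.logb 4 (((4 ^ p - 1 : ℕ) : ℝ) / ((3 * (1 + 2 * (p : ℝ)))) + 1)⌋ ≤
      adicComplexity4 p (graySeq (seqCompl (seqS3 p θ)) (seqS4 p θ)) := by
  have h4 : 4 ∣ p - 1 := by omega
  have h₁ : IsCyclotomicSeq p θ (seqS1 p θ) 0 _ := .indicator_union hp hθ h4 0 1
  have h₃ : IsCyclotomicSeq p θ (seqS3 p θ) 0 _ := .indicator_union hp hθ h4 1 2
  have h₄ : IsCyclotomicSeq p θ (seqS4 p θ) 0 _ := .indicator_union hp hθ h4 2 3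
  refine ⟨theorem6_general hp hp8 hθ (h₁.graySeq h₃) ?_ ?_ ?_ ?_,
    theorem6_general hp hp8 hθ (h₃.graySeq h₄) ?_ ?_ ?_ ?_,
    theorem6_general hp hp8 hθ (h₃.seqCompl.graySeq h₄) ?_ ?_ ?_ ?_⟩ <;> decide
end

section
/- Theorem 7: For the quaternary sequence u₁₆ = φ[s₃+1, s₄+1] of period p, the 4-adic complexity satisfies Φ₄(u₁₆) ≥ ⌊log₄((4^p − 1)/((1+2p)(1+6p)(1+8p)) + 1)⌋. -/
open Finset

/-! Read a sequence `u` of prime period `p` with values in `{0, …, m}` as a function on `ZMod p`,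
and suppose that `u` is invariant under `t ↦ θ ^ e * t` for a primitive root `θ`. In the group
ring of `ZMod p` the product over `i < e` of the elements `∑ t, u t • [θ ^ i * t]` is fixed by
the dilation `[t] ↦ [θ * t]`, hence equals `n + b * ∑ t, [t]` for integers `n` and `b`. Two families
of characters are applied to this identity.

* Complex characters give `n` as a product of `e` character sums. If `u` is not constant these do
  not vanish, so `n ≠ 0`; Parseval and the inequality of arithmetic and geometric means give
  `|n| ≤ (m * p / (2 * √(p - 1))) ^ e`.
* If `d` divides both `β ^ p - 1` and `∑ t, u t * β ^ t`, then modulo `d` the character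
  `t ↦ β ^ t` kills the factor `i = 0`, and `β - 1` times its sum over `ZMod p` is zero, so `d`
  divides `(β - 1) * n`.

Hence the greatest common divisor in the definition of `Φ₄` is at most
`3 * (m * p / (2 * √(p - 1))) ^ e`.
-/

section CharSum

variable {F R : Type*} [Field F] [CommRing R]

/-- The additive character `t ↦ [t]` of `F` in its integral group ring, through which every
other additive character of `F` factors. -/
noncomputable def groupRingChar (F : Type*) [Field F] : AddChar F (AddMonoidAlgebra ℤ F) :=
  AddChar.toMonoidHomEquiv.symm (AddMonoidAlgebra.of ℤ F)

lemma groupRingChar_apply (t : F) : groupRingChar F t = AddMonoidAlgebra.single t 1 := rfl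

lemma lift_groupRingChar (ψ : AddChar F R) (t : F) :
    AddMonoidAlgebra.lift ℤ R F ψ.toMonoidHom (groupRingChar F t) = ψ t := by
  simp [groupRingChar_apply]

lemma coeff_mul_left_of_mapDomainRingHom_eq {a : F} (ha : a ≠ 0) {P : AddMonoidAlgebra ℤ F}
    (hP : AddMonoidAlgebra.mapDomainRingHom ℤ (AddMonoidHom.mulLeft a) P = P) (t : F) :
    P.coeff (a * t) = P.coeff t := by
  conv_lhs => rw [← hP]
  exact Finsupp.mapDomain_apply (mul_right_injective₀ ha) P.coeff t

variable [Fintype F]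

/-- The Fourier coefficient at `k` of the integer weight `w` with respect to the additive
character `ψ`. For `w` the indicator function of a cyclotomic class this is a Gauss period. -/
def charSum (w : F → ℤ) (ψ : AddChar F R) (k : F) : R := ∑ t, (w t : R) * ψ (k * t)

lemma charSum_mul_left {w : F → ℤ} {a : F} (ha : a ≠ 0) (hw : ∀ t, w (a * t) = w t)
    (ψ : AddChar F R) (k : F) : charSum w ψ (a * k) = charSum w ψ k :=
  Fintype.sum_bijective (a * ·) (mulLeft_bijective₀ a ha) _ _ fun t => by
    rw [hw, mul_left_comm, mul_assoc]

lemma prod_charSum_pow_succ {w : F → ℤ} {θ : F} {e : ℕ} (hθ : θ ≠ 0)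
    (hw : ∀ t, w (θ ^ e * t) = w t) (ψ : AddChar F R) :
    ∏ i ∈ range e, charSum w ψ (θ ^ (i + 1)) = ∏ i ∈ range e, charSum w ψ (θ ^ i) := by
  have hperiod : charSum w ψ (θ ^ e) = charSum w ψ (θ ^ 0) := by
    simpa using charSum_mul_left (pow_ne_zero e hθ) hw ψ 1
  cases e with
  | zero => rfl
  | succ e => rw [prod_range_succ, prod_range_succ', hperiod]

lemma lift_charSum_groupRingChar (w : F → ℤ) (ψ : AddChar F R) (k : F) :
    AddMonoidAlgebra.lift ℤ R F ψ.toMonoidHom (charSum w (groupRingChar F) k) =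
      charSum w ψ k := by
  simp [charSum, lift_groupRingChar]

lemma mapDomainRingHom_charSum_groupRingChar (w : F → ℤ) (a k : F) :
    AddMonoidAlgebra.mapDomainRingHom ℤ (AddMonoidHom.mulLeft a) (charSum w (groupRingChar F) k) =
      charSum w (groupRingChar F) (a * k) := by
  simp only [charSum, map_sum, map_mul, map_intCast, groupRingChar_apply]
  simp [mul_assoc]

lemma exists_eq_add_mul_sum_groupRingChar {θ : F}
    (hθ : IsPrimitiveRoot θ (Fintype.card F - 1)) {P : AddMonoidAlgebra ℤ F}
    (hP : AddMonoidAlgebra.mapDomainRingHom ℤ (AddMonoidHom.mulLeft θ) P = P) :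
    ∃ n b : ℤ, P = n + b * ∑ t, groupRingChar F t := by
  classical
  have hcard : Fintype.card F - 1 ≠ 0 := (Nat.sub_pos_of_lt Fintype.one_lt_card).ne'
  have : NeZero (Fintype.card F - 1) := ⟨hcard⟩
  have hpow (i : ℕ) : P.coeff (θ ^ i) = P.coeff 1 := by
    induction i with
    | zero => rw [pow_zero]
    | succ i ih =>
      rw [pow_succ', coeff_mul_left_of_mapDomainRingHom_eq (hθ.ne_zero hcard) hP, ih]
  have hconst (t : F) (ht : t ≠ 0) : P.coeff t = P.coeff 1 := by
    obtain ⟨i, -, rfl⟩ := hθ.eq_pow_of_pow_eq_one (FiniteField.pow_card_sub_one_eq_one t ht)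
    exact hpow i
  refine ⟨P.coeff 0 - P.coeff 1, P.coeff 1, ?_⟩
  ext t
  have hsum : (∑ s, groupRingChar F s).coeff t = 1 := by
    simp [groupRingChar_apply, Finsupp.single_apply]
  rw [AddMonoidAlgebra.coeff_add, Finsupp.add_apply, ← zsmul_eq_mul,
    AddMonoidAlgebra.coeff_smul, Finsupp.smul_apply, hsum, AddMonoidAlgebra.intCast_def,
    AddMonoidAlgebra.coeff_single]
  by_cases ht : t = 0
  · simp [ht]
  · simp [Ne.symm ht, hconst t ht]

theorem exists_prod_charSum_eq {w : F → ℤ} {θ : F} {e : ℕ}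
    (hθ : IsPrimitiveRoot θ (Fintype.card F - 1)) (hw : ∀ t, w (θ ^ e * t) = w t) :
    ∃ n b : ℤ, ∀ (R : Type*) [CommRing R] (ψ : AddChar F R),
      ∏ i ∈ range e, charSum w ψ (θ ^ i) = n + b * ∑ t, ψ t := by
  have hθ0 : θ ≠ 0 := hθ.ne_zero (Nat.sub_pos_of_lt Fintype.one_lt_card).ne'
  obtain ⟨n, b, hP⟩ := exists_eq_add_mul_sum_groupRingChar hθ
    (P := ∏ i ∈ range e, charSum w (groupRingChar F) (θ ^ i)) <| by
      simp only [map_prod, mapDomainRingHom_charSum_groupRingChar, ← pow_succ',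
        prod_charSum_pow_succ hθ0 hw]
  refine ⟨n, b, fun R _ ψ => ?_⟩
  simpa [lift_charSum_groupRingChar, lift_groupRingChar] using
    congrArg (AddMonoidAlgebra.lift ℤ R F ψ.toMonoidHom) hP

end CharSum

section Fourier

variable {F : Type*} [Field F] [Fintype F]

lemma sum_norm_sq_charSum (w : F → ℤ) {ψ : AddChar F ℂ} (hψ : ψ.IsPrimitive) :
    ∑ k, ‖charSum w ψ k‖ ^ 2 = Fintype.card F * ∑ t, (w t : ℝ) ^ 2 := by
  classical
  have hexpand (k : F) : ((‖charSum w ψ k‖ : ℂ)) ^ 2 =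
      ∑ t, ∑ s, (w t : ℂ) * w s * ψ (k * (t - s)) := by
    rw [← Complex.mul_conj', charSum, map_sum, sum_mul_sum]
    refine sum_congr rfl fun t _ => sum_congr rfl fun s _ => ?_
    rw [map_mul (starRingEnd ℂ), ← AddChar.map_neg_eq_conj, mul_sub, sub_eq_add_neg,
      AddChar.map_add_eq_mul]
    simp only [map_intCast]
    ring
  have horth (t : F) : ∑ s, ∑ k, (w t : ℂ) * w s * ψ (k * (t - s)) =
      Fintype.card F * (w t : ℂ) ^ 2 := by
    simp only [← mul_sum, AddChar.sum_mulShift _ hψ, sub_eq_zero]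
    simp only [Nat.cast_ite, Nat.cast_zero, mul_ite, mul_zero, sum_ite_eq, mem_univ, if_true]
    ring
  apply Complex.ofReal_injective
  push_cast
  simp only [hexpand]
  rw [sum_comm, mul_sum]
  exact sum_congr rfl fun t _ => by rw [sum_comm, horth]

lemma apply_zero_add_sum_range_pow {M : Type*} [AddCommMonoid M] {θ : F}
    (hθ : IsPrimitiveRoot θ (Fintype.card F - 1)) (g : F → M) :
    g 0 + ∑ i ∈ range (Fintype.card F - 1), g (θ ^ i) = ∑ k, g k := by
  classical
  have hcard : Fintype.card F - 1 ≠ 0 := (Nat.sub_pos_of_lt Fintype.one_lt_card).ne'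
  have : NeZero (Fintype.card F - 1) := ⟨hcard⟩
  rw [Fintype.sum_eq_add_sum_compl 0 g]
  congr 1
  refine sum_bij (fun i _ => θ ^ i) ?_ ?_ ?_ fun _ _ => rfl
  · intro i _
    simpa using pow_ne_zero i (hθ.ne_zero hcard)
  · intro i hi j hj
    exact hθ.pow_inj (mem_range.1 hi) (mem_range.1 hj)
  · intro k hk
    obtain ⟨i, hi, rfl⟩ :=
      hθ.eq_pow_of_pow_eq_one (FiniteField.pow_card_sub_one_eq_one k (by simpa using hk))
    exact ⟨i, mem_range.2 hi, rfl⟩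

lemma four_mul_sum_norm_sq_charSum_le {w : F → ℤ} {m : ℤ} (hw0 : ∀ t, 0 ≤ w t)
    (hwm : ∀ t, w t ≤ m) {θ : F} (hθ : IsPrimitiveRoot θ (Fintype.card F - 1))
    {ψ : AddChar F ℂ} (hψ : ψ.IsPrimitive) :
    4 * ∑ i ∈ range (Fintype.card F - 1), ‖charSum w ψ (θ ^ i)‖ ^ 2 ≤
      ((m : ℝ) * Fintype.card F) ^ 2 := by
  have hzero : ‖charSum w ψ 0‖ ^ 2 = (∑ t, (w t : ℝ)) ^ 2 := by
    have : charSum w ψ 0 = ((∑ t, w t : ℤ) : ℂ) := by simp [charSum]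
    rw [this, Complex.norm_intCast, sq_abs, Int.cast_sum]
  have hparseval := (apply_zero_add_sum_range_pow hθ fun k => ‖charSum w ψ k‖ ^ 2).trans
    (sum_norm_sq_charSum w hψ)
  have hsq : ∑ t, (w t : ℝ) ^ 2 ≤ m * ∑ t, (w t : ℝ) := by
    rw [mul_sum]
    refine sum_le_sum fun t _ => ?_
    rw [sq]
    exact_mod_cast mul_le_mul_of_nonneg_right (hwm t) (hw0 t)
  have hscaled := mul_le_mul_of_nonneg_left hsq (Nat.cast_nonneg (α := ℝ) (Fintype.card F))
  rw [hzero] at hparseval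
  -- With `S = ∑ t, w t`, the left side is at most `4 * S * (m * q - S)`, where `q = #F`.
  linarith [sq_nonneg ((m : ℝ) * Fintype.card F - 2 * ∑ t, (w t : ℝ))]

end Fourier

lemma sum_range_mul_of_periodic {M : Type*} [AddCommMonoid M] {g : ℕ → M} {a : ℕ}
    (hg : Function.Periodic g a) (b : ℕ) : ∑ i ∈ range (b * a), g i = b • ∑ i ∈ range a, g i := by
  induction b with
  | zero => simp
  | succ b ih =>
    rw [add_one_mul, sum_range_add, ih, succ_nsmul]
    congr 1
    refine sum_congr rfl fun i _ => ?_
    rw [add_comm]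
    exact hg.nat_mul b i

lemma prod_le_sum_div_card_pow {ι : Type*} (s : Finset ι) {z : ι → ℝ}
    (hz : ∀ i ∈ s, 0 ≤ z i) : ∏ i ∈ s, z i ≤ ((∑ i ∈ s, z i) / #s) ^ #s := by
  rcases s.eq_empty_or_nonempty with rfl | hs
  · simp
  have hcard : (0 : ℝ) < #s := by exact_mod_cast hs.card_pos
  have hmean := Real.geom_mean_le_arith_mean s (fun _ => 1) z (by simp) (by simpa using hcard) hz
  simp only [Real.rpow_one, sum_const, nsmul_eq_mul, mul_one, one_mul] at hmean
  rwa [Real.rpow_inv_le_iff_of_pos (prod_nonneg hz) (div_nonneg (sum_nonneg hz) hcard.le) hcard,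
    Real.rpow_natCast] at hmean

lemma nsmul_sum_range_comm_of_periodic {M : Type*} [AddCommMonoid M] {g : ℕ → M} {a b : ℕ}
    (ha : Function.Periodic g a) (hb : Function.Periodic g b) :
    b • ∑ i ∈ range a, g i = a • ∑ i ∈ range b, g i := by
  rw [← sum_range_mul_of_periodic ha, ← sum_range_mul_of_periodic hb, mul_comm]

section ProductBound

variable {F : Type*} [Field F] [Fintype F] {w : F → ℤ} {m : ℤ} {θ : F} {e : ℕ} {ψ : AddChar F ℂ}

lemma sum_norm_sq_charSum_div_le (hw0 : ∀ t, 0 ≤ w t) (hwm : ∀ t, w t ≤ m)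
    (hθ : IsPrimitiveRoot θ (Fintype.card F - 1)) (hw : ∀ t, w (θ ^ e * t) = w t)
    (hψ : ψ.IsPrimitive) :
    (∑ i ∈ range e, ‖charSum w ψ (θ ^ i)‖ ^ 2) / e ≤
      (m * Fintype.card F / (2 * √(Fintype.card F - 1))) ^ 2 := by
  have hcard : 0 < Fintype.card F - 1 := Nat.sub_pos_of_lt Fintype.one_lt_card
  have hcast : ((Fintype.card F - 1 : ℕ) : ℝ) = Fintype.card F - 1 :=
    Nat.cast_pred Fintype.card_pos
  have hpos : (0 : ℝ) < Fintype.card F - 1 := hcast ▸ Nat.cast_pos.2 hcard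
  have hperiod : Function.Periodic (fun i => ‖charSum w ψ (θ ^ i)‖ ^ 2) e := fun i => by
    simp only [add_comm i, pow_add, charSum_mul_left (pow_ne_zero e (hθ.ne_zero hcard.ne')) hw]
  have hperiod' : Function.Periodic (fun i => ‖charSum w ψ (θ ^ i)‖ ^ 2)
      (Fintype.card F - 1) := fun i => by
    simp only [pow_add, hθ.pow_eq_one, mul_one]
  have hsum := nsmul_sum_range_comm_of_periodic hperiod hperiod'
  rw [nsmul_eq_mul, nsmul_eq_mul, hcast] at hsum
  refine div_le_of_le_mul₀ e.cast_nonneg (sq_nonneg _) (le_of_mul_le_mul_left ?_ hpos)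
  calc (Fintype.card F - 1) * ∑ i ∈ range e, ‖charSum w ψ (θ ^ i)‖ ^ 2
      = e * ∑ i ∈ range (Fintype.card F - 1), ‖charSum w ψ (θ ^ i)‖ ^ 2 := hsum
    _ ≤ e * ((m * Fintype.card F) ^ 2 / 4) := by
        gcongr
        linarith [four_mul_sum_norm_sq_charSum_le hw0 hwm hθ hψ]
    _ = _ := by
        rw [div_pow, mul_pow 2, Real.sq_sqrt hpos.le]
        field_simp
        ring

lemma norm_prod_charSum_le (hw0 : ∀ t, 0 ≤ w t) (hwm : ∀ t, w t ≤ m)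
    (hθ : IsPrimitiveRoot θ (Fintype.card F - 1)) (hw : ∀ t, w (θ ^ e * t) = w t)
    (hψ : ψ.IsPrimitive) :
    ‖∏ i ∈ range e, charSum w ψ (θ ^ i)‖ ≤
      (m * Fintype.card F / (2 * √(Fintype.card F - 1))) ^ e := by
  set B : ℝ := m * Fintype.card F / (2 * √(Fintype.card F - 1))
  have hB : 0 ≤ B := by
    have : (0 : ℝ) ≤ m := by exact_mod_cast (hw0 0).trans (hwm 0)
    positivity
  refine le_of_sq_le_sq ?_ (pow_nonneg hB e)
  calc ‖∏ i ∈ range e, charSum w ψ (θ ^ i)‖ ^ 2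
      = ∏ i ∈ range e, ‖charSum w ψ (θ ^ i)‖ ^ 2 := by rw [norm_prod, prod_pow]
    _ ≤ ((∑ i ∈ range e, ‖charSum w ψ (θ ^ i)‖ ^ 2) / e) ^ e := by
        simpa only [card_range] using prod_le_sum_div_card_pow (range e)
          (z := fun i => ‖charSum w ψ (θ ^ i)‖ ^ 2) fun _ _ => sq_nonneg _
    _ ≤ (B ^ 2) ^ e := by
        gcongr
        exact sum_norm_sq_charSum_div_le hw0 hwm hθ hw hψ
    _ = (B ^ e) ^ 2 := pow_right_comm B 2 e

end ProductBound

lemma sub_one_mul_sum_addChar {A R : Type*} [AddGroup A] [Fintype A] [CommRing R]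
    (χ : AddChar A R) (s : A) : (χ s - 1) * ∑ t, χ t = 0 := by
  have htranslate : ∑ t, χ (s + t) = ∑ t, χ t :=
    Fintype.sum_equiv (Equiv.addLeft s) _ _ fun _ => rfl
  simp only [AddChar.map_add_eq_mul, ← mul_sum] at htranslate
  rw [sub_one_mul, htranslate, sub_self]

section PrimeField

variable {p : ℕ} [Fact p.Prime]

lemma isPrimitiveRoot_apply_one {R : Type*} [CommRing R] {χ : AddChar (ZMod p) R} (hχ : χ ≠ 1) :
    IsPrimitiveRoot (χ 1) p := by
  rw [IsPrimitiveRoot.iff_orderOf]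
  refine orderOf_eq_prime ?_ ((AddChar.zmod_char_ne_one_iff p χ).1 hχ)
  rw [← AddChar.map_nsmul_eq_pow, nsmul_one, ZMod.natCast_self, AddChar.map_zero_eq_one]

lemma sum_mul_apply_ne_zero {K : Type*} [Field K] [CharZero K] {χ : AddChar (ZMod p) K}
    (hχ : χ ≠ 1) {w : ZMod p → ℤ} (hw : ∃ t, w t ≠ w 0) : ∑ t, (w t : K) * χ t ≠ 0 := by
  obtain ⟨t, ht⟩ := hw
  have hpow : ∑ s, (w s : K) * χ s = ∑ s, (w s : K) * χ 1 ^ s.val :=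
    sum_congr rfl fun s _ => by
      rw [← AddChar.map_nsmul_eq_pow, nsmul_one, ZMod.natCast_zmod_val]
  rw [hpow]
  intro hsum
  have hζ := isPrimitiveRoot_apply_one hχ
  have hp := Fact.out (p := p.Prime)
  cases p with
  | zero => exact absurd rfl hp.ne_zero
  | succ p => exact ht ((hζ.sum_eq_zero_iff_forall_eq_int hp w).1 hsum t 0)

lemma charSum_ne_zero {K : Type*} [Field K] [CharZero K] {ψ : AddChar (ZMod p) K}
    (hψ : ψ.IsPrimitive) {w : ZMod p → ℤ} (hw : ∃ t, w t ≠ w 0) {k : ZMod p} (hk : k ≠ 0) :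
    charSum w ψ k ≠ 0 :=
  sum_mul_apply_ne_zero (hψ hk) hw

lemma exists_ne_zero_prod_charSum_eq {w : ZMod p → ℤ} {m : ℤ} (hw0 : ∀ t, 0 ≤ w t)
    (hwm : ∀ t, w t ≤ m) (hne : ∃ t, w t ≠ w 0) {θ : ZMod p} (hθ : IsPrimitiveRoot θ (p - 1))
    {e : ℕ} (hw : ∀ t, w (θ ^ e * t) = w t) :
    ∃ n b : ℤ, n ≠ 0 ∧ |(n : ℝ)| ≤ (m * p / (2 * √(p - 1))) ^ e ∧
      ∀ (R : Type) [CommRing R] (ψ : AddChar (ZMod p) R),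
        ∏ i ∈ range e, charSum w ψ (θ ^ i) = n + b * ∑ t, ψ t := by
  have hp := Fact.out (p := p.Prime)
  have hψ := AddChar.zmodChar_primitive_of_primitive_root p
    (Complex.isPrimitiveRoot_exp p hp.ne_zero)
  set ψ : AddChar (ZMod p) ℂ := AddChar.zmodChar p _
  have hcard : Fintype.card (ZMod p) = p := ZMod.card p
  obtain ⟨n, b, hprod⟩ := exists_prod_charSum_eq (hcard.symm ▸ hθ) hw
  have hn : ∏ i ∈ range e, charSum w ψ (θ ^ i) = n := by
    rw [hprod, AddChar.sum_eq_zero_of_ne_one (by simpa using hψ one_ne_zero), mul_zero, add_zero]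
  refine ⟨n, b, fun hzero => ?_, ?_, hprod⟩
  · rw [hzero, Int.cast_zero] at hn
    exact prod_ne_zero_iff.2 (fun i _ => charSum_ne_zero hψ hne
      (pow_ne_zero i (hθ.ne_zero (Nat.sub_pos_of_lt hp.one_lt).ne'))) hn
  · rw [← Complex.norm_intCast, ← hn]
    simpa only [hcard] using norm_prod_charSum_le hw0 hwm (hcard.symm ▸ hθ) hw hψ

theorem le_abs_sub_one_mul_of_dvd_sum {w : ZMod p → ℤ} {m : ℤ} (hw0 : ∀ t, 0 ≤ w t)
    (hwm : ∀ t, w t ≤ m) (hne : ∃ t, w t ≠ w 0) {θ : ZMod p} (hθ : IsPrimitiveRoot θ (p - 1))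
    {e : ℕ} (he : e ≠ 0) (hw : ∀ t, w (θ ^ e * t) = w t) {β : ℤ} (hβ : β ≠ 1) {d : ℕ}
    (hd : (d : ℤ) ∣ β ^ p - 1) (hdw : (d : ℤ) ∣ ∑ t, w t * β ^ t.val) :
    (d : ℝ) ≤ |(β : ℝ) - 1| * (m * p / (2 * √(p - 1))) ^ e := by
  obtain ⟨n, b, hn0, hnle, hprod⟩ := exists_ne_zero_prod_charSum_eq hw0 hwm hne hθ hw
  have hβp : (β : ZMod d) ^ p = 1 := by
    simpa [sub_eq_zero] using (ZMod.intCast_zmod_eq_zero_iff_dvd _ d).2 hd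
  set χ : AddChar (ZMod p) (ZMod d) := AddChar.zmodChar p hβp
  have hχ1 : χ 1 = β := by simpa using AddChar.zmodChar_apply' hβp 1
  have hgeom : ((β : ZMod d) - 1) * ∑ t, χ t = 0 := hχ1 ▸ sub_one_mul_sum_addChar χ 1
  have hcharSum : charSum w χ (θ ^ 0) = 0 := by
    simpa [charSum, χ, AddChar.zmodChar_apply] using (ZMod.intCast_zmod_eq_zero_iff_dvd _ d).2 hdw
  have hχprod := hprod (ZMod d) χ
  rw [prod_eq_zero (mem_range.2 he.bot_lt) hcharSum] at hχprod
  have hdvd : (d : ℤ) ∣ (β - 1) * n := by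
    refine (ZMod.intCast_zmod_eq_zero_iff_dvd _ d).1 ?_
    push_cast
    linear_combination (1 - (β : ZMod d)) * hχprod - (b : ZMod d) * hgeom
  have hdle : (d : ℤ) ≤ |(β - 1) * n| :=
    Int.le_of_dvd (abs_pos.2 (mul_ne_zero (sub_ne_zero.2 hβ) hn0)) ((dvd_abs _ _).2 hdvd)
  calc (d : ℝ) ≤ |(β : ℝ) - 1| * |(n : ℝ)| := by rw [← abs_mul]; exact_mod_cast hdle
    _ ≤ _ := mul_le_mul_of_nonneg_left hnle (abs_nonneg _)

end PrimeField

lemma sum_zmod_val {M : Type*} [AddCommMonoid M] {n : ℕ} [NeZero n] (f : ℕ → M) :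
    ∑ t : ZMod n, f t.val = ∑ t ∈ range n, f t := by
  cases n with
  | zero => exact absurd rfl (NeZero.ne 0)
  | succ n => exact Fin.sum_univ_eq_sum_range f (n + 1)

lemma floor_logb_div_add_one_anti {B N a b : ℝ} (hB : 1 < B) (hN : 0 ≤ N) (ha : 0 < a)
    (hab : a ≤ b) : ⌊Real.logb B (N / b + 1)⌋ ≤ ⌊Real.logb B (N / a + 1)⌋ := by
  have hb : 0 < b := ha.trans_le hab
  refine Int.floor_le_floor (Real.logb_le_logb_of_le hB (by positivity) ?_)
  gcongr

lemma gcd_seqVal_le {p : ℕ} [Fact p.Prime] {u : ℕ → ℕ} {m : ℕ} (hu : ∀ t : ZMod p, u t.val ≤ m)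
    (hne : ∃ t : ZMod p, u t.val ≠ u 0) {θ : ZMod p} (hθ : IsPrimitiveRoot θ (p - 1))
    {e : ℕ} (he : e ≠ 0) (hinv : ∀ t : ZMod p, u (θ ^ e * t).val = u t.val) :
    (Nat.gcd (4 ^ p - 1) (seqVal p u) : ℝ) ≤ 3 * (m * p / (2 * √(p - 1))) ^ e := by
  set d := Nat.gcd (4 ^ p - 1) (seqVal p u)
  have hd : (d : ℤ) ∣ 4 ^ p - 1 := by
    have := Int.natCast_dvd_natCast.2 (Nat.gcd_dvd_left (4 ^ p - 1) (seqVal p u))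
    rwa [Nat.cast_pred (by positivity), Nat.cast_pow] at this
  have hdu : (d : ℤ) ∣ ∑ t : ZMod p, (u t.val : ℤ) * 4 ^ t.val := by
    rw [sum_zmod_val fun t => (u t : ℤ) * 4 ^ t]
    exact_mod_cast Nat.gcd_dvd_right (4 ^ p - 1) (seqVal p u)
  have hle := le_abs_sub_one_mul_of_dvd_sum (w := fun t : ZMod p => (u t.val : ℤ)) (m := m)
    (fun t => by positivity) (fun t => by exact_mod_cast hu t)
    (by simpa using hne) hθ he (fun t => by rw [hinv]) (by norm_num : (4 : ℤ) ≠ 1) hd hdu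
  have habs : |((4 : ℤ) : ℝ) - 1| = 3 := by norm_num
  rwa [habs, Int.cast_natCast] at hle

lemma gray_le_three {a b : ℕ} (hb : b ≤ 3) : gray a b ≤ 3 := by
  unfold gray
  split <;> omega

/-- The quaternary sequence `u₁₆ = φ[s₃ + 1, s₄ + 1]`. -/
def seqU16 (p θ : ℕ) : ℕ → ℕ := graySeq (seqCompl (seqS3 p θ)) (seqCompl (seqS4 p θ))

lemma seqU16_le_three (p θ t : ℕ) : seqU16 p θ t ≤ 3 :=
  gray_le_three ((Nat.sub_le 1 _).trans (by norm_num))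

section CyclotomicClass

variable {p θ : ℕ} [Fact p.Prime]

lemma mem_cycD_iff (hp4 : 4 ∣ p - 1) (hθ : IsPrimitiveRoot (θ : ZMod p) (p - 1))
    (i : ℕ) (t : ZMod p) :
    t.val ∈ cycD p θ i ↔ ∃ j : ℕ, t = (θ : ZMod p) ^ (i + 4 * j) := by
  have hval (k : ℕ) : θ ^ k % p = t.val ↔ t = (θ : ZMod p) ^ k := by
    rw [← ZMod.val_natCast, (ZMod.val_injective p).eq_iff, Nat.cast_pow, eq_comm]
  have hpos : 0 < (p - 1) / 4 :=
    Nat.div_pos (Nat.le_of_dvd (Nat.sub_pos_of_lt (Fact.out : p.Prime).one_lt) hp4) four_pos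
  simp only [cycD, mem_image, mem_range, hval]
  refine ⟨fun ⟨j, _, hj⟩ => ⟨j, hj⟩, fun ⟨j, hj⟩ => ⟨j % ((p - 1) / 4), Nat.mod_lt _ hpos, ?_⟩⟩
  calc t = (θ : ZMod p) ^ (i + 4 * j) := hj
    _ = θ ^ (i + 4 * ((p - 1) / 4 * (j / ((p - 1) / 4)) + j % ((p - 1) / 4))) := by
        rw [Nat.div_add_mod]
    _ = θ ^ (i + 4 * (j % ((p - 1) / 4))) := by
        rw [mul_add, ← mul_assoc, Nat.mul_div_cancel' hp4, add_left_comm, pow_add, pow_mul,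
          hθ.pow_eq_one, one_pow, one_mul]

lemma val_pow_four_mul_mem_cycD_iff (hp4 : 4 ∣ p - 1) (hθ : IsPrimitiveRoot (θ : ZMod p) (p - 1))
    (i : ℕ) (t : ZMod p) :
    ((θ : ZMod p) ^ 4 * t).val ∈ cycD p θ i ↔ t.val ∈ cycD p θ i := by
  rw [mem_cycD_iff hp4 hθ, mem_cycD_iff hp4 hθ]
  constructor
  · rintro ⟨j, hj⟩
    obtain ⟨m, hm⟩ := hp4
    have hm0 : m ≠ 0 := by
      have := (Fact.out : p.Prime).one_lt
      omega
    obtain ⟨k, rfl⟩ := Nat.exists_eq_succ_of_ne_zero hm0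
    refine ⟨j + k, ?_⟩
    calc t = (θ : ZMod p) ^ (4 * (k + 1)) * t := by rw [← hm, hθ.pow_eq_one, one_mul]
      _ = (θ : ZMod p) ^ (4 * k) * ((θ : ZMod p) ^ 4 * t) := by ring
      _ = (θ : ZMod p) ^ (i + 4 * (j + k)) := by rw [hj]; ring
  · rintro ⟨j, rfl⟩
    exact ⟨j + 1, by ring⟩

lemma seqU16_pow_four_mul (hp4 : 4 ∣ p - 1) (hθ : IsPrimitiveRoot (θ : ZMod p) (p - 1))
    (t : ZMod p) :
    seqU16 p θ ((θ : ZMod p) ^ 4 * t).val = seqU16 p θ t.val := by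
  simp only [seqU16, graySeq, seqCompl, seqS3, seqS4, mem_union,
    val_pow_four_mul_mem_cycD_iff hp4 hθ]

lemma exists_seqU16_ne (hp4 : 4 ∣ p - 1) (hθ : IsPrimitiveRoot (θ : ZMod p) (p - 1)) :
    ∃ t : ZMod p, seqU16 p θ t.val ≠ seqU16 p θ 0 := by
  have hzero (i : ℕ) : 0 ∉ cycD p θ i := by
    rw [← ZMod.val_zero (n := p), mem_cycD_iff hp4 hθ]
    rintro ⟨j, hj⟩
    exact pow_ne_zero _ (hθ.ne_zero (Nat.sub_pos_of_lt (Fact.out : p.Prime).one_lt).ne') hj.symm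
  have htwo : ((θ : ZMod p) ^ 2).val ∈ cycD p θ 2 :=
    (mem_cycD_iff hp4 hθ 2 _).2 ⟨0, rfl⟩
  refine ⟨(θ : ZMod p) ^ 2, ?_⟩
  simp [seqU16, graySeq, seqCompl, seqS3, seqS4, gray, hzero, htwo]

end CyclotomicClass

lemma three_mul_div_sqrt_pow_four_le {x : ℝ} (hx : 2 ≤ x) :
    3 * (3 * x / (2 * √(x - 1))) ^ 4 ≤ (1 + 2 * x) * (1 + 6 * x) * (1 + 8 * x) := by
  have : 0 ≤ x := by linarith
  have hpos : 0 < x - 1 := by linarith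
  have hsqrt : √(x - 1) ^ 4 = (x - 1) ^ 2 := by
    rw [pow_mul (√(x - 1)) 2 2, Real.sq_sqrt hpos.le]
  have hlin : 2 * x ≤ 4 * (x - 1) := by linarith
  rw [div_pow, mul_pow 2, hsqrt, ← mul_div_assoc, div_le_iff₀ (by positivity)]
  calc 3 * (3 * x) ^ 4 = 243 * x ^ 4 := by ring
    _ ≤ 384 * x * x ^ 4 := by gcongr; linarith
    _ = 2 * x * (6 * x) * (8 * x) * (2 * x) ^ 2 := by ring
    _ ≤ (1 + 2 * x) * (1 + 6 * x) * (1 + 8 * x) * (4 * (x - 1)) ^ 2 := by gcongr <;> linarith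
    _ = (1 + 2 * x) * (1 + 6 * x) * (1 + 8 * x) * (2 ^ 4 * (x - 1) ^ 2) := by ring

theorem theorem7_general {p : ℕ} (hp : p.Prime) {θ : ZMod p} (hθ : IsPrimitiveRoot θ (p - 1))
    {e : ℕ} (he : e ≠ 0) {u : ℕ → ℕ} {m : ℕ} (hu : ∀ t : ZMod p, u t.val ≤ m)
    (hinv : ∀ t : ZMod p, u (θ ^ e * t).val = u t.val) (hne : ∃ t : ZMod p, u t.val ≠ u 0) :
    ⌊Real.logb 4 (((4 ^ p - 1 : ℕ) : ℝ) / (3 * (m * p / (2 * √(p - 1))) ^ e) + 1)⌋ ≤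
      adicComplexity4 p u := by
  have : Fact p.Prime := ⟨hp⟩
  have hpos : 0 < Nat.gcd (4 ^ p - 1) (seqVal p u) :=
    Nat.gcd_pos_of_pos_left _ (Nat.sub_pos_of_lt (Nat.one_lt_pow hp.ne_zero (by norm_num)))
  exact floor_logb_div_add_one_anti (by norm_num) (Nat.cast_nonneg _) (Nat.cast_pos.2 hpos)
    (gcd_seqVal_le hu hne hθ he hinv)

theorem theorem7
    (p : ℕ) (hp : p.Prime) (hp8 : p % 8 = 5)
    (x y : ℤ) (hx : x % 4 = 1) (hxy : (p : ℤ) = x ^ 2 + 4 * y ^ 2)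
    (θ : ℕ) (hθ : IsPrimitiveRoot (θ : ZMod p) (p - 1))
    (hy : 16 * (((cycD p θ 0).filter (fun a => (a + 1) % p ∈ cycD p θ 1)).card : ℤ)
        = (p : ℤ) + 1 + 2 * x - 8 * y)
    :
    ⌊Real.logb 4 (((4 ^ p - 1 : ℕ) : ℝ) / (((1 + 2 * (p : ℝ)) * (1 + 6 * (p : ℝ)) * (1 + 8 * (p : ℝ)))) + 1)⌋ ≤
      adicComplexity4 p (graySeq (seqCompl (seqS3 p θ)) (seqCompl (seqS4 p θ))) := by
  have : Fact p.Prime := ⟨hp⟩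
  have hp4 : 4 ∣ p - 1 := by omega
  have hp2 : (2 : ℝ) ≤ p := by exact_mod_cast hp.two_le
  have hpos : (0 : ℝ) < p - 1 := by linarith
  exact (floor_logb_div_add_one_anti (by norm_num) (Nat.cast_nonneg _) (by positivity)
    (three_mul_div_sqrt_pow_four_le hp2)).trans
      (theorem7_general (u := seqU16 p θ) hp hθ four_ne_zero (fun t => seqU16_le_three p θ t.val)
        (seqU16_pow_four_mul hp4 hθ) (exists_seqU16_ne hp4 hθ))
end
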